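/- Let S be a finitely generated reduced cancellative commutative monoid and n ∈ S with at least two factorizations. Then the catenary degree of n is at least the minimum of the catenary degrees of the Betti elements of S that divide n. -/

import Mathlib

/-- The set of factorizations of `n` in terms of the generators `gens`. -/
def ZsetM {S : Type*} [AddCancelCommMonoid S] {k : ℕ} (gens : Fin k → S) (n : S) :
    Set (Fin k → ℕ) :=
  {a | ∑ i, a i • gens i = n}

/-- The length of a factorization. -/
def flen {k : ℕ} (a : Fin k → ℕ) : ℕ := ∑ i, a i

/-- The distance between two factorizations:
`max (|a - gcd(a,b)|, |b - gcd(a,b)|)` (componentwise gcd = min). -/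
def fdist {k : ℕ} (a b : Fin k → ℕ) : ℕ :=
  max (∑ i, (a i - b i)) (∑ i, (b i - a i))

/-- There is an `N`-chain of factorizations within `Z` from `a` to `b`. -/
def IsNChain {k : ℕ} (Z : Set (Fin k → ℕ)) (N : ℕ) (a b : Fin k → ℕ) : Prop :=
  ∃ l : List (Fin k → ℕ), l.head? = some a ∧ l.getLast? = some b ∧
    (∀ x ∈ l, x ∈ Z) ∧ l.Chain' (fun x y => fdist x y ≤ N)

/-- The catenary degree of `n`: the least `N` such that any two factorizations
of `n` are connected by an `N`-chain. -/
noncomputable def catDegM {S : Type*} [AddCancelCommMonoid S] {k : ℕ}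
    (gens : Fin k → S) (n : S) : ℕ :=
  sInf {N | ∀ a ∈ ZsetM gens n, ∀ b ∈ ZsetM gens n, IsNChain (ZsetM gens n) N a b}

/-- `n` is a Betti element: the graph on `Z(n)` joining factorizations with
nonzero componentwise gcd is disconnected. -/
def IsBettiM {S : Type*} [AddCancelCommMonoid S] {k : ℕ} (gens : Fin k → S)
    (n : S) : Prop :=
  ∃ a ∈ ZsetM gens n, ∃ b ∈ ZsetM gens n,
    ¬ Relation.ReflTransGen
      (fun x y => x ∈ ZsetM gens n ∧ y ∈ ZsetM gens n ∧ ∃ i, min (x i) (y i) ≠ 0) a b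

section Factorizations

variable {S : Type*} [AddCancelCommMonoid S] {k : ℕ} {gens : Fin k → S}

lemma flen_add (a b : Fin k → ℕ) : flen (a + b) = flen a + flen b := by
  simp [flen, Finset.sum_add_distrib]

lemma add_mem_ZsetM {a b : Fin k → ℕ} {m n : S} (ha : a ∈ ZsetM gens m)
    (hb : b ∈ ZsetM gens n) : a + b ∈ ZsetM gens (m + n) := by
  simp only [ZsetM, Set.mem_ofPred_eq] at *
  simp [add_smul, Finset.sum_add_distrib, ha, hb]

lemma mem_ZsetM_of_add_mem {a b : Fin k → ℕ} {m n : S} (hab : a + b ∈ ZsetM gens (m + n))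
    (hb : b ∈ ZsetM gens n) : a ∈ ZsetM gens m := by
  simp only [ZsetM, Set.mem_ofPred_eq] at *
  rw [← hb] at hab
  simpa [add_smul, Finset.sum_add_distrib] using hab

/-- In a reduced monoid whose generators are irreducible, zero has a unique factorization. -/
lemma eq_zero_of_mem_ZsetM_zero (hred : ∀ a b : S, a + b = 0 → a = 0)
    (hatom : ∀ i, ∀ a : Fin k → ℕ, ∑ j, a j • gens j = gens i → a = Pi.single i 1)
    {a : Fin k → ℕ} (ha : a ∈ ZsetM gens 0) : a = 0 := by
  ext i
  by_contra hi
  obtain ⟨c, hc⟩ := Nat.exists_eq_succ_of_ne_zero hi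
  have hsum : ∑ j, a j • gens j = 0 := ha
  rw [← Finset.add_sum_erase _ _ (Finset.mem_univ i), hc, Nat.succ_eq_add_one, add_comm c,
    add_smul, one_smul, add_assoc] at hsum
  have h0 := congrFun (hatom i 0 (by simp [hred _ _ hsum])) i
  simp at h0

lemma finite_ZsetM (hred : ∀ a b : S, a + b = 0 → a = 0)
    (hatom : ∀ i, ∀ a : Fin k → ℕ, ∑ j, a j • gens j = gens i → a = Pi.single i 1)
    (n : S) : (ZsetM gens n).Finite := by
  have hanti : IsAntichain (· ≤ ·) (ZsetM gens n) := by
    intro a ha b hb hne hle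
    have hab : (b - a) + a = b := tsub_add_cancel_of_le hle
    have h0 : b - a ∈ ZsetM gens 0 := by
      apply mem_ZsetM_of_add_mem (n := n) _ ha
      rwa [hab, zero_add]
    rw [eq_zero_of_mem_ZsetM_zero hred hatom h0, zero_add] at hab
    exact hne hab
  exact WellQuasiOrderedLE.finite_of_isAntichain hanti

lemma fdist_le {a b : Fin k → ℕ} {L : ℕ} (ha : flen a ≤ L) (hb : flen b ≤ L) :
    fdist a b ≤ L :=
  max_le ((Finset.sum_le_sum fun i _ => Nat.sub_le (a i) (b i)).trans ha)
    ((Finset.sum_le_sum fun i _ => Nat.sub_le (b i) (a i)).trans hb)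

lemma isNChain_of_flen_le {n : S} {L : ℕ} (hL : ∀ a ∈ ZsetM gens n, flen a ≤ L) :
    ∀ a ∈ ZsetM gens n, ∀ b ∈ ZsetM gens n, IsNChain (ZsetM gens n) L a b := by
  intro a ha b hb
  refine ⟨[a, b], rfl, rfl, ?_, ?_⟩
  · simp [ha, hb]
  · exact List.isChain_pair.2 (fdist_le (hL a ha) (hL b hb))

lemma catDegM_le_of_flen_le {n : S} {L : ℕ} (hL : ∀ a ∈ ZsetM gens n, flen a ≤ L) :
    catDegM gens n ≤ L :=
  Nat.sInf_le (isNChain_of_flen_le hL)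

/-- A chain between distinct factorizations leaves its starting point by a short step. -/
lemma IsNChain.exists_fdist_le {Z : Set (Fin k → ℕ)} {N : ℕ} {a b : Fin k → ℕ}
    (h : IsNChain Z N a b) (hab : a ≠ b) : ∃ y ∈ Z, y ≠ a ∧ fdist a y ≤ N := by
  obtain ⟨l, hhead, hlast, hmem, hchain⟩ := h
  induction l with
  | nil => simp at hhead
  | cons x l ih =>
    obtain rfl : x = a := by simpa using hhead
    cases l with
    | nil => exact absurd (by simpa using hlast) hab
    | cons y l =>
      have hchain' := List.isChain_cons_cons.1 hchain
      by_cases hy : y = x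
      · exact ih (by simp [hy]) (by simpa using hlast)
          (fun z hz => hmem z (List.mem_cons_of_mem _ hz)) hchain'.2
      · exact ⟨y, hmem y (by simp), hy, hchain'.1⟩

lemma exists_rel_ne_of_reflTransGen {α : Type*} {r : α → α → Prop} {a b : α}
    (h : Relation.ReflTransGen r a b) (hab : a ≠ b) : ∃ x y, r x y ∧ x ≠ y := by
  by_contra! hr
  induction h with
  | refl => exact hab rfl
  | tail _ hbc ih => exact ih (hr _ _ hbc ▸ hab)

/-- An element with two factorizations is divisible by a Betti element. -/
lemma exists_isBettiM_dvd (L : ℕ) (m : S) (hL : ∀ a ∈ ZsetM gens m, flen a ≤ L)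
    (hm : ∃ a ∈ ZsetM gens m, ∃ b ∈ ZsetM gens m, a ≠ b) :
    ∃ p : S, IsBettiM gens p ∧ ∃ t : S, m = p + t := by
  induction L generalizing m with
  | zero =>
    obtain ⟨a, ha, b, hb, hab⟩ := hm
    have hzero : ∀ c ∈ ZsetM gens m, c = 0 := fun c hc => by
      ext i
      simpa [flen] using Finset.sum_eq_zero_iff.1 (Nat.le_zero.1 (hL c hc)) i
    exact absurd ((hzero a ha).trans (hzero b hb).symm) hab
  | succ L ih =>
    by_cases hB : IsBettiM gens m
    · exact ⟨m, hB, 0, (add_zero m).symm⟩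
    obtain ⟨a, ha, b, hb, hab⟩ := hm
    unfold IsBettiM at hB
    push Not at hB
    obtain ⟨x, y, ⟨hx, hy, i, hi⟩, hxy⟩ := exists_rel_ne_of_reflTransGen (hB a ha b hb) hab
    have hsingle : (Pi.single i 1 : Fin k → ℕ) ∈ ZsetM gens (gens i) := by
      simp [ZsetM, Pi.single_apply]
    have hsub : ∀ c : Fin k → ℕ, c i ≠ 0 → (c - Pi.single i 1) + Pi.single i 1 = c := by
      intro c hc
      apply tsub_add_cancel_of_le
      intro j
      by_cases hj : j = i
      · subst hj
        simpa using Nat.one_le_iff_ne_zero.2 hc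
      · simp [hj]
    have hx' := hsub x (by omega)
    have hy' := hsub y (by omega)
    let q := ∑ j, (x - Pi.single i 1 : Fin k → ℕ) j • gens j
    have hxq : x - Pi.single i 1 ∈ ZsetM gens q := rfl
    have hq : q + gens i = m := by
      have h := add_mem_ZsetM hxq hsingle
      rw [hx'] at h
      exact h.symm.trans hx
    have hyq : y - Pi.single i 1 ∈ ZsetM gens q := by
      apply mem_ZsetM_of_add_mem _ hsingle
      rwa [hy', hq]
    obtain ⟨p, hp, t, ht⟩ := ih q
      (fun c hc => by
        have h := hL _ (hq ▸ add_mem_ZsetM hc hsingle)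
        rw [flen_add] at h
        have h1 : flen (Pi.single i 1 : Fin k → ℕ) = 1 := by simp [flen]
        omega)
      ⟨_, hxq, _, hyq, fun h => hxy (by rw [← hx', ← hy', h])⟩
    exact ⟨p, hp, t + gens i, by rw [← add_assoc, ← ht, hq]⟩

end Factorizations

/-- The catenary degree of an element n with at least two factorizations is at
least the minimum of the catenary degrees of the Betti elements dividing n. -/
theorem min_betti_le_catDeg {S : Type*} [AddCancelCommMonoid S] {k : ℕ}
    (gens : Fin k → S)
    (hred : ∀ a b : S, a + b = 0 → a = 0)
    (hgen : ∀ s : S, ∃ a : Fin k → ℕ, ∑ i, a i • gens i = s)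
    (hatom : ∀ i, ∀ a : Fin k → ℕ, ∑ j, a j • gens j = gens i → a = Pi.single i 1)
    (n : S) (hn : ∃ a ∈ ZsetM gens n, ∃ b ∈ ZsetM gens n, a ≠ b) :
    sInf {c | ∃ m : S, IsBettiM gens m ∧ (∃ t : S, n = m + t) ∧ catDegM gens m = c}
      ≤ catDegM gens n := by
  obtain ⟨a, ha, b, hb, hab⟩ := hn
  -- A step out of a longest factorization `z` bounds the lengths of the part it changes.
  obtain ⟨z, hz, hmax⟩ := Set.exists_max_image _ flen (finite_ZsetM hred hatom n) ⟨a, ha⟩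
  obtain ⟨w, hw, hzw⟩ : ∃ w ∈ ZsetM gens n, z ≠ w := by
    by_cases h : z = a
    · exact ⟨b, hb, h ▸ hab⟩
    · exact ⟨a, ha, h⟩
  have hchain : ∀ a ∈ ZsetM gens n, ∀ b ∈ ZsetM gens n,
      IsNChain (ZsetM gens n) (catDegM gens n) a b :=
    Nat.sInf_mem (s := {N | ∀ a ∈ ZsetM gens n, ∀ b ∈ ZsetM gens n,
      IsNChain (ZsetM gens n) N a b}) ⟨_, isNChain_of_flen_le hmax⟩
  obtain ⟨y, hy, hyz, hdist⟩ := (hchain z hz w hw).exists_fdist_le hzw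
  have hz' : (z - y) + z ⊓ y = z := by ext i; simp
  have hy' : (y - z) + z ⊓ y = y := by ext i; simp; omega
  let m := ∑ i, (z - y) i • gens i
  let g := ∑ i, (z ⊓ y) i • gens i
  have hzm : z - y ∈ ZsetM gens m := rfl
  have hg : z ⊓ y ∈ ZsetM gens g := rfl
  have hmg : m + g = n := by
    have h := add_mem_ZsetM hzm hg
    rw [hz'] at h
    exact h.symm.trans hz
  have hym : y - z ∈ ZsetM gens m := by
    apply mem_ZsetM_of_add_mem _ hg
    rwa [hy', hmg]
  have hlen : ∀ f ∈ ZsetM gens m, flen f ≤ catDegM gens n := by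
    intro f hf
    have h := hmax _ (hmg ▸ add_mem_ZsetM hf hg)
    rw [← hz', flen_add, flen_add, hz'] at h
    exact (Nat.le_of_add_le_add_right h).trans ((le_max_left _ _).trans hdist)
  obtain ⟨p, hp, t, ht⟩ := exists_isBettiM_dvd _ m hlen
    ⟨_, hzm, _, hym, fun h => hyz (by rw [← hy', ← h, hz'])⟩
  obtain ⟨e, he⟩ := hgen t
  have hple : catDegM gens p ≤ catDegM gens n := catDegM_le_of_flen_le fun f hf => by
    have h := hlen (f + e) (ht ▸ add_mem_ZsetM hf he)
    rw [flen_add] at h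
    omega
  refine le_trans (Nat.sInf_le ?_) hple
  exact ⟨p, hp, ⟨t + g, by rw [← add_assoc, ← ht, hmg]⟩, rfl⟩
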